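/- arXiv:0905.0679 — 2 statements merged into one kernel-verified Lean document; each statement's English description precedes it below -/
import Mathlib

section
/- (q-deformed MacMahon identity) For positive integers a, b, c, a parameter q, and a parameter ζ such that no denominator vanishes: Σ over all plane partitions Π contained in the a×b×c box of q^{|Π|} ∏_{1≤i≤a, 1≤j≤b} (ζ² − q^{i+j−2Π_{ij}−2})/(ζ² − q^{i+j−c−2}) equals ∏_{1≤i≤a, 1≤j≤b} (1 − q^{i+j+c−1})/(1 − q^{i+j−1}). -/
open Finset
open scoped Classical

/-- A plane partition in the `a×b×c` box: an `a×b` array with entries in `{0,…,c}`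
that is weakly decreasing along rows and columns. -/
def IsPlanePartition {a b c : ℕ} (P : Fin a → Fin b → Fin (c + 1)) : Prop :=
  ∀ i i' j j', i ≤ i' → j ≤ j' → P i' j' ≤ P i j

/-- The volume `|Π|` of a plane partition. -/
def ppVolume {a b c : ℕ} (P : Fin a → Fin b → Fin (c + 1)) : ℕ :=
  ∑ i : Fin a, ∑ j : Fin b, (P i j : ℕ)

/-!
A symmetric plane partition is a Gelfand–Tsetlin pattern whose rows are its main diagonal and its
superdiagonals, so the arrays with a given diagonal can be summed one row at a time. The Vandermonde
determinant in the values of a q-quadratic lattice `l ↦ y q^l + w q^{-l}` at `lam i - i` obeys the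
same recursion: in the Newton basis of the lattice, differences of consecutive rows telescope into
sums over the sequences interlacing with `lam`, leaving a Vandermonde determinant for the lattice
with `w q` in place of `w`. Hence the product of the lattice differences is, up to factors
`q^k - 1`, a weighted sum over the symmetric plane partitions with diagonal `lam`.

For `lam = (c, …, c, 0, …, 0)`, with `a` entries `c` and `b` entries `0`, these are the block arrays
`[[c, P], [Pᵗ, 0]]` with `P` a plane partition in the box. The contributions of the diagonal blocks
cancel over the universal ring `ℤ[T;T⁻¹][X]`, so they cancel for every `q` and `y`. The identity is
the case `w = 1`, `y = ζ² q^a`.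
-/

theorem castAdd_lt_natAdd {a b : ℕ} (i : Fin a) (j : Fin b) : i.castAdd b < j.natAdd a :=
  i.isLt.trans_le (Nat.le_add_right a j)

section TriangularProducts

variable {M : Type*} [CommMonoid M]

theorem prod_Ioi_fin_succ {n : ℕ} (f : Fin (n + 1) → Fin (n + 1) → M) :
    ∏ i, ∏ j ∈ Ioi i, f i j =
      (∏ i : Fin n, f i.castSucc i.succ) * ∏ i : Fin n, ∏ j ∈ Ioi i, f i.castSucc j.succ := by
  have row (i : Fin n) : ∏ j ∈ Ioi i.castSucc, f i.castSucc j =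
      f i.castSucc i.succ * ∏ j ∈ Ioi i, f i.castSucc j.succ := by
    have Ioi_eq : Ioi i.castSucc = (Ici i).map (Fin.succEmb n) := by
      ext j
      rw [Fin.map_succEmb_Ici, mem_Ioi, mem_Ici, Fin.castSucc_lt_iff_succ_le]
    rw [mul_prod_Ioi_eq_prod_Ici i (f := fun j => f i.castSucc j.succ), Ioi_eq, prod_map]
    rfl
  rw [Fin.prod_univ_castSucc, ← prod_mul_distrib]
  simp [row, ← Fin.top_eq_last]

theorem prod_Ioi_fin_add {a b : ℕ} (f : Fin (a + b) → Fin (a + b) → M) :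
    ∏ i, ∏ j ∈ Ioi i, f i j =
      (∏ i : Fin a, ∏ j ∈ Ioi i, f (i.castAdd b) (j.castAdd b)) *
        (∏ i : Fin a, ∏ j : Fin b, f (i.castAdd b) (j.natAdd a)) *
        ∏ i : Fin b, ∏ j ∈ Ioi i, f (i.natAdd a) (j.natAdd a) := by
  have ite_form {n : ℕ} (g : Fin n → Fin n → M) (i : Fin n) :
      ∏ j ∈ Ioi i, g i j = ∏ j, if i < j then g i j else 1 := by
    rw [← prod_filter, filter_lt_eq_Ioi]
  have castAdd_lt_castAdd (i j : Fin a) : i.castAdd b < j.castAdd b ↔ i < j := Iff.rfl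
  simp only [ite_form, ite_form fun i j => f (Fin.castAdd b i) (Fin.castAdd b j),
    ite_form fun i j => f (Fin.natAdd a i) (Fin.natAdd a j), Fin.prod_univ_add, prod_mul_distrib,
    castAdd_lt_natAdd, (castAdd_lt_natAdd _ _).not_gt, castAdd_lt_castAdd, Fin.natAdd_lt_natAdd_iff,
    if_true, if_false, prod_const_one, one_mul, mul_assoc]

end TriangularProducts

section SymmetricPlanePartitions

variable {n c : ℕ}

/-- The symmetric plane partitions in the `n × n × c` box with main diagonal `lam`. They encode
Gelfand–Tsetlin patterns with top row `lam`: the `k`-th superdiagonal is the `k`-th row below the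
top one. -/
noncomputable def symmetricPlanePartitions (lam : Fin n → Fin (c + 1)) :
    Finset (Fin n → Fin n → Fin (c + 1)) :=
  {T | IsPlanePartition T ∧ (∀ i j, T i j = T j i) ∧ ∀ i, T i i = lam i}

theorem mem_symmetricPlanePartitions {lam : Fin n → Fin (c + 1)}
    {T : Fin n → Fin n → Fin (c + 1)} :
    T ∈ symmetricPlanePartitions lam ↔
      IsPlanePartition T ∧ (∀ i j, T i j = T j i) ∧ ∀ i, T i i = lam i :=
  mem_filter_univ _

/-- The sequences `mu` that interlace with `lam`, i.e. `lam 0 ≥ mu 0 ≥ lam 1 ≥ mu 1 ≥ ⋯ ≥ lam n`: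
the possible rows below a row `lam` of a Gelfand–Tsetlin pattern. -/
def interlacing (lam : Fin (n + 1) → Fin (c + 1)) : Finset (Fin n → Fin (c + 1)) :=
  Fintype.piFinset fun i => Icc (lam i.succ) (lam i.castSucc)

theorem mem_interlacing {lam : Fin (n + 1) → Fin (c + 1)} {mu : Fin n → Fin (c + 1)} :
    mu ∈ interlacing lam ↔ ∀ i, lam i.succ ≤ mu i ∧ mu i ≤ lam i.castSucc := by
  simp [interlacing]

theorem antitone_of_mem_interlacing {lam : Fin (n + 1) → Fin (c + 1)} (hlam : Antitone lam)
    {mu : Fin n → Fin (c + 1)} (hmu : mu ∈ interlacing lam) : Antitone mu := by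
  intro i j hij
  rw [mem_interlacing] at hmu
  rcases hij.eq_or_lt with rfl | hlt
  · exact le_rfl
  · calc
      mu j ≤ lam j.castSucc := (hmu j).2
      _ ≤ lam i.succ := hlam (Fin.succ_le_castSucc_iff.2 hlt)
      _ ≤ mu i := (hmu i).1

/-- The symmetric array obtained from `T` by deleting its main diagonal: the strict upper triangle
of `T` becomes the weak upper triangle. -/
def deleteDiagonal (T : Fin (n + 1) → Fin (n + 1) → Fin (c + 1)) (i j : Fin n) : Fin (c + 1) :=
  T (min i j).castSucc (max i j).succ

/-- The symmetric array with main diagonal `lam` whose strict upper triangle is the weak upper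
triangle of `S`; inverse to `deleteDiagonal`. -/
def insertDiagonal (lam : Fin (n + 1) → Fin (c + 1)) (S : Fin n → Fin n → Fin (c + 1))
    (i j : Fin (n + 1)) : Fin (c + 1) :=
  if h : i = j then lam i
  else S ⟨min (i : ℕ) j, by omega⟩ ⟨max (i : ℕ) j - 1, by omega⟩

theorem deleteDiagonal_mem {lam : Fin (n + 1) → Fin (c + 1)}
    {T : Fin (n + 1) → Fin (n + 1) → Fin (c + 1)} (hT : T ∈ symmetricPlanePartitions lam) :
    deleteDiagonal T ∈ symmetricPlanePartitions fun i => T i.castSucc i.succ := by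
  rw [mem_symmetricPlanePartitions] at hT ⊢
  refine ⟨fun i i' j j' hi hj => ?_, fun i j => ?_, fun i => ?_⟩
  · exact hT.1 _ _ _ _ (Fin.castSucc_le_castSucc_iff.2 (min_le_min hi hj))
      (Fin.succ_le_succ_iff.2 (max_le_max hi hj))
  · rw [deleteDiagonal, deleteDiagonal, min_comm, max_comm]
  · rw [deleteDiagonal, min_self, max_self]

theorem superdiagonal_mem_interlacing {lam : Fin (n + 1) → Fin (c + 1)}
    {T : Fin (n + 1) → Fin (n + 1) → Fin (c + 1)} (hT : T ∈ symmetricPlanePartitions lam) :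
    (fun i => T i.castSucc i.succ) ∈ interlacing lam := by
  rw [mem_symmetricPlanePartitions] at hT
  obtain ⟨hT, -, hdiag⟩ := hT
  refine mem_interlacing.2 fun i => ⟨?_, ?_⟩
  · rw [← hdiag]
    exact hT _ _ _ _ i.castSucc_le_succ le_rfl
  · rw [← hdiag]
    exact hT _ _ _ _ le_rfl i.castSucc_le_succ

theorem insertDiagonal_comm (lam : Fin (n + 1) → Fin (c + 1)) (S : Fin n → Fin n → Fin (c + 1))
    (i j : Fin (n + 1)) : insertDiagonal lam S i j = insertDiagonal lam S j i := by
  simp only [insertDiagonal, eq_comm (a := j), min_comm (j : ℕ), max_comm (j : ℕ)]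
  split_ifs with h
  · rw [h]
  · rfl

theorem insertDiagonal_mem {lam : Fin (n + 1) → Fin (c + 1)} (hlam : Antitone lam)
    {mu : Fin n → Fin (c + 1)} (hmu : mu ∈ interlacing lam) {S : Fin n → Fin n → Fin (c + 1)}
    (hS : S ∈ symmetricPlanePartitions mu) :
    insertDiagonal lam S ∈ symmetricPlanePartitions lam := by
  rw [mem_symmetricPlanePartitions] at hS ⊢
  rw [mem_interlacing] at hmu
  obtain ⟨hS, -, hdiag⟩ := hS
  refine ⟨fun i i' j j' hi hj => ?_, insertDiagonal_comm lam S, fun i => dif_pos rfl⟩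
  · unfold insertDiagonal
    split_ifs with h' h h
    · exact hlam hi
    · let m : Fin n := ⟨max (i : ℕ) j - 1, by omega⟩
      calc
        lam i' ≤ lam m.succ := hlam (Fin.le_def.2 (by simp only [m, Fin.val_succ]; omega))
        _ ≤ mu m := (hmu m).1
        _ = S m m := (hdiag m).symm
        _ ≤ S _ m := hS _ _ _ _ (Fin.le_def.2 (by simp only [m]; omega)) le_rfl
    · let m : Fin n := ⟨min (i' : ℕ) j', by omega⟩
      calc
        S m _ ≤ S m m := hS _ _ _ _ le_rfl (Fin.le_def.2 (by simp only [m]; omega))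
        _ = mu m := hdiag m
        _ ≤ lam m.castSucc := (hmu m).2
        _ ≤ lam i := hlam (Fin.le_def.2 (by simp only [m, Fin.val_castSucc]; omega))
    · exact hS _ _ _ _ (Fin.le_def.2 (by simp only; omega)) (Fin.le_def.2 (by simp only; omega))

theorem insertDiagonal_castSucc_succ (lam : Fin (n + 1) → Fin (c + 1))
    (S : Fin n → Fin n → Fin (c + 1)) {i j : Fin n} (hij : i ≤ j) :
    insertDiagonal lam S i.castSucc j.succ = S i j := by
  have hlt : i.castSucc < j.succ := Fin.castSucc_lt_succ_iff.2 hij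
  rw [insertDiagonal, dif_neg hlt.ne]
  congr 2
  · exact min_eq_left hlt.le
  · exact congrArg (· - 1) (max_eq_right (Fin.le_def.1 hlt.le))

theorem deleteDiagonal_insertDiagonal {lam : Fin (n + 1) → Fin (c + 1)} {mu : Fin n → Fin (c + 1)}
    {S : Fin n → Fin n → Fin (c + 1)} (hS : S ∈ symmetricPlanePartitions mu) :
    deleteDiagonal (insertDiagonal lam S) = S := by
  funext i j
  rw [deleteDiagonal, insertDiagonal_castSucc_succ lam S min_le_max]
  rcases le_total i j with h | h
  · rw [min_eq_left h, max_eq_right h]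
  · rw [min_eq_right h, max_eq_left h, (mem_symmetricPlanePartitions.1 hS).2.1]

theorem insertDiagonal_deleteDiagonal {lam : Fin (n + 1) → Fin (c + 1)}
    {T : Fin (n + 1) → Fin (n + 1) → Fin (c + 1)} (hT : T ∈ symmetricPlanePartitions lam) :
    insertDiagonal lam (deleteDiagonal T) = T := by
  obtain ⟨-, hsymm, hdiag⟩ := mem_symmetricPlanePartitions.1 hT
  have of_lt {i j : Fin (n + 1)} (h : i < j) :
      insertDiagonal lam (deleteDiagonal T) i j = T i j := by
    obtain ⟨i, rfl⟩ := Fin.exists_castSucc_eq.2 (h.trans_le (Fin.le_last j)).ne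
    obtain ⟨j, rfl⟩ := Fin.exists_succ_eq.2 ((Fin.zero_le _).trans_lt h).ne'
    have hij : i ≤ j := Fin.castSucc_lt_succ_iff.1 h
    rw [insertDiagonal_castSucc_succ _ _ hij, deleteDiagonal, min_eq_left hij, max_eq_right hij]
  funext i j
  rcases lt_trichotomy i j with h | rfl | h
  · exact of_lt h
  · rw [hdiag, insertDiagonal, dif_pos rfl]
  · rw [insertDiagonal_comm, of_lt h, hsymm]

theorem sum_symmetricPlanePartitions_succ {R : Type*} [CommSemiring R]
    {lam : Fin (n + 1) → Fin (c + 1)} (hlam : Antitone lam)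
    (w : Fin (n + 1) → Fin (n + 1) → Fin (c + 1) → R) :
    ∑ T ∈ symmetricPlanePartitions lam, ∏ i, ∏ j ∈ Ioi i, w i j (T i j) =
      ∑ mu ∈ interlacing lam, (∏ i : Fin n, w i.castSucc i.succ (mu i)) *
        ∑ S ∈ symmetricPlanePartitions mu, ∏ i, ∏ j ∈ Ioi i, w i.castSucc j.succ (S i j) := by
  simp only [mul_sum]
  rw [sum_sigma']
  refine sum_bij' (fun T _ => ⟨fun i => T i.castSucc i.succ, deleteDiagonal T⟩)
    (fun p _ => insertDiagonal lam p.2)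
    (fun T hT => mem_sigma.2 ⟨superdiagonal_mem_interlacing hT, deleteDiagonal_mem hT⟩)
    (fun p hp => insertDiagonal_mem hlam (mem_sigma.1 hp).1 (mem_sigma.1 hp).2)
    (fun T hT => insertDiagonal_deleteDiagonal hT) (fun p hp => ?_) (fun T _ => ?_)
  · obtain ⟨mu, S⟩ := p
    have hS : S ∈ symmetricPlanePartitions mu := (mem_sigma.1 hp).2
    have hdiag : (fun i : Fin n => insertDiagonal lam S i.castSucc i.succ) = mu := by
      funext i
      rw [insertDiagonal_castSucc_succ lam S le_rfl, (mem_symmetricPlanePartitions.1 hS).2.2]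
    simp only [hdiag, deleteDiagonal_insertDiagonal hS]
  · rw [prod_Ioi_fin_succ]
    congr 1
    refine prod_congr rfl fun i _ => prod_congr rfl fun j hj => ?_
    have hij : i ≤ j := (mem_Ioi.1 hj).le
    simp only [deleteDiagonal, min_eq_left hij, max_eq_right hij]

end SymmetricPlanePartitions

section BlockArrays

variable {a b c : ℕ}

/-- The symmetric array with diagonal blocks constantly `c` and `0`, upper right block `P` and lower
left block the transpose of `P`. -/
def blockSymmetric (P : Fin a → Fin b → Fin (c + 1)) : Fin (a + b) → Fin (a + b) → Fin (c + 1) :=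
  Fin.append (fun i => Fin.append (fun _ => Fin.last c) (P i))
    fun j => Fin.append (fun i => P i j) fun _ => 0

/-- The main diagonal `(c, …, c, 0, …, 0)` of `blockSymmetric`. -/
def rectangle (a b c : ℕ) : Fin (a + b) → Fin (c + 1) :=
  Fin.append (fun _ => Fin.last c) fun _ => 0

theorem antitone_rectangle : Antitone (rectangle a b c) := by
  intro i j hij
  induction i using Fin.addCases with
  | left i => simpa [rectangle] using Fin.le_last _
  | right i =>
    induction j using Fin.addCases with
    | left j => exact absurd hij (castAdd_lt_natAdd j i).not_ge
    | right j => simp [rectangle]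

theorem blockSymmetric_mem {P : Fin a → Fin b → Fin (c + 1)} (hP : IsPlanePartition P) :
    blockSymmetric P ∈ symmetricPlanePartitions (rectangle a b c) := by
  refine mem_symmetricPlanePartitions.2 ⟨fun i i' j j' hi hj => ?_, fun i j => ?_, fun i => ?_⟩
  · induction i using Fin.addCases <;> induction i' using Fin.addCases <;>
    induction j using Fin.addCases <;> induction j' using Fin.addCases <;>
    simp only [blockSymmetric, Fin.append_left, Fin.append_right, Fin.le_last, Fin.zero_le]
    all_goals first
      | exact absurd hi (castAdd_lt_natAdd _ _).not_ge
      | exact absurd hj (castAdd_lt_natAdd _ _).not_ge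
      | exact hP _ _ _ _ hi ((Fin.natAdd_le_natAdd_iff a).1 hj)
      | exact hP _ _ _ _ hj ((Fin.natAdd_le_natAdd_iff a).1 hi)
  · induction i using Fin.addCases <;> induction j using Fin.addCases <;> simp [blockSymmetric]
  · induction i using Fin.addCases <;> simp [blockSymmetric, rectangle]

theorem blockSymmetric_upperRight {T : Fin (a + b) → Fin (a + b) → Fin (c + 1)}
    (hT : T ∈ symmetricPlanePartitions (rectangle a b c)) :
    blockSymmetric (fun i j => T (i.castAdd b) (j.natAdd a)) = T := by
  obtain ⟨hT, hsymm, hdiag⟩ := mem_symmetricPlanePartitions.1 hT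
  funext i j
  induction i using Fin.addCases with
  | left i =>
    induction j using Fin.addCases with
    | left j =>
      have hle : Fin.last c ≤ T (i.castAdd b) (j.castAdd b) := calc
        Fin.last c = T ((max i j).castAdd b) ((max i j).castAdd b) := by simp [hdiag, rectangle]
        _ ≤ T (i.castAdd b) (j.castAdd b) := hT _ _ _ _ (le_max_left i j) (le_max_right i j)
      simpa [blockSymmetric] using (Fin.last_le_iff.1 hle).symm
    | right j => simp [blockSymmetric]
  | right i =>
    induction j using Fin.addCases with
    | left j => simp [blockSymmetric, hsymm (i.natAdd a)]
    | right j =>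
      have hle : T (i.natAdd a) (j.natAdd a) ≤ 0 := calc
        T (i.natAdd a) (j.natAdd a) ≤ T ((min i j).natAdd a) ((min i j).natAdd a) :=
          hT _ _ _ _ ((Fin.natAdd_le_natAdd_iff a).2 (min_le_left i j))
            ((Fin.natAdd_le_natAdd_iff a).2 (min_le_right i j))
        _ = 0 := by simp [hdiag, rectangle]
      simpa [blockSymmetric] using (Fin.le_zero_iff.1 hle).symm

theorem sum_symmetricPlanePartitions_rectangle {R : Type*} [CommSemiring R]
    (w : Fin (a + b) → Fin (a + b) → Fin (c + 1) → R) :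
    ∑ T ∈ symmetricPlanePartitions (rectangle a b c), ∏ i, ∏ j ∈ Ioi i, w i j (T i j) =
      (∏ i : Fin a, ∏ j ∈ Ioi i, w (i.castAdd b) (j.castAdd b) (Fin.last c)) *
        (∑ P : {P : Fin a → Fin b → Fin (c + 1) // IsPlanePartition P},
          ∏ i, ∏ j, w (i.castAdd b) (j.natAdd a) (P.1 i j)) *
        ∏ i : Fin b, ∏ j ∈ Ioi i, w (i.natAdd a) (j.natAdd a) 0 := by
  rw [mul_sum, sum_mul]
  refine (sum_bij' (fun P _ => blockSymmetric P.1)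
    (fun T hT => ⟨fun i j => T (i.castAdd b) (j.natAdd a), fun i i' j j' hi hj =>
      (mem_symmetricPlanePartitions.1 hT).1 _ _ _ _ hi ((Fin.natAdd_le_natAdd_iff a).2 hj)⟩)
    (fun P _ => blockSymmetric_mem P.2) (fun T _ => mem_univ _) (fun P _ => ?_)
    (fun T hT => blockSymmetric_upperRight hT) fun P _ => ?_).symm
  · ext1
    funext i j
    simp [blockSymmetric]
  · rw [prod_Ioi_fin_add]
    simp [blockSymmetric]

end BlockArrays

section Determinants

variable {R : Type*} [CommRing R] {n : ℕ}

theorem det_vandermonde_eq_det_newton (v : Fin n → R) (x : ℕ → R) :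
    (Matrix.vandermonde v).det = (Matrix.of fun i j : Fin n => ∏ r ∈ range j, (v i - x r)).det := by
  nontriviality R
  rw [Matrix.det_eval_matrixOfPolynomials_eq_det_vandermonde v
    fun j => ∏ r ∈ range j, (Polynomial.X - Polynomial.C (x r))]
  · simp [Polynomial.eval_prod]
  · exact fun j => by rw [Polynomial.natDegree_finsetProd_X_sub_C_eq_card, card_range]
  · exact fun j => Polynomial.monic_prod_X_sub_C _ _

theorem det_eq_det_sub_pred_of_column_zero_eq_one {M : Matrix (Fin (n + 1)) (Fin (n + 1)) R}
    (hM : ∀ i, M i 0 = 1) :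
    M.det = (Matrix.of fun i j : Fin n => M i.succ j.succ - M i.castSucc j.succ).det := by
  let D : Matrix (Fin (n + 1)) (Fin (n + 1)) R :=
    Matrix.of (Fin.cons (M 0) fun i j => M i.succ j - M i.castSucc j)
  have det_M : M.det = D.det :=
    Matrix.det_eq_of_forall_row_eq_smul_add_pred (fun _ => 1) (fun j => by simp [D])
      fun i j => by simp [D]
  have column_zero (i : Fin n) : D i.succ 0 = 0 := by simp [D, hM]
  have corner : D 0 0 = 1 := hM 0
  rw [det_M, Matrix.det_succ_column_zero, Fin.sum_univ_succ]
  simp only [column_zero, corner, mul_zero, zero_mul, sum_const_zero, add_zero, mul_one,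
    Fin.val_zero, pow_zero, one_mul, Fin.succAbove_zero]
  rfl

theorem det_sum_row_eq_sum_piFinset {m α : Type*} [Fintype m] [DecidableEq m] (s : m → Finset α)
    (f : m → α → m → R) :
    (Matrix.of fun i j => ∑ k ∈ s i, f i k j).det =
      ∑ k ∈ Fintype.piFinset s, (Matrix.of fun i j => f i (k i) j).det := by
  have row_sum : (Matrix.of fun i j => ∑ k ∈ s i, f i k j) = fun i => ∑ k ∈ s i, f i k := by
    ext i j
    simp
  rw [row_sum]
  exact (Matrix.detRowAlternating (R := R) (n := m)).toMultilinearMap.map_sum_finset f s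

end Determinants
section QQuadraticLattice

variable {R : Type*} [CommRing R] (q : Rˣ) (y w : R)

/-- The q-quadratic lattice `l ↦ y q^l + w q^{-l}`. -/
def qQuadraticLattice (l : ℤ) : R :=
  y * ↑(q ^ l) + w * ↑(q ^ (-l))

/-- The weight `y q^{m-i} - w q^{j-m}` of an entry `m` in cell `(i, j)` of an array. -/
def cellWeight (i j m : ℤ) : R :=
  y * ↑(q ^ (m - i)) - w * ↑(q ^ (j - m))

theorem qQuadraticLattice_sub (l r : ℤ) :
    qQuadraticLattice q y w r - qQuadraticLattice q y w l =
      (↑(q ^ (r - l)) - 1) * (y * ↑(q ^ l) - w * ↑(q ^ (-r))) := by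
  have h₁ : q ^ r = q ^ (r - l) * q ^ l := by rw [← zpow_add, sub_add_cancel]
  have h₂ : q ^ (-l) = q ^ (r - l) * q ^ (-r) := by rw [← zpow_add]; ring_nf
  rw [qQuadraticLattice, qQuadraticLattice, h₁, h₂]
  push_cast
  ring

theorem cellWeight_mul_self (i j m : ℤ) :
    cellWeight q y (w * q) i j m = cellWeight q y w i (j + 1) m := by
  have h : j + 1 - m = 1 + (j - m) := by ring
  rw [cellWeight, cellWeight, h, zpow_add, zpow_one, Units.val_mul, mul_assoc]

theorem newton_end_factors_sub (l m : ℤ) :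
    ↑(q ^ (-(m + 1))) * ((1 - ↑(q ^ (m + 1 - l))) * (y * ↑(q ^ l) - w * q)) -
        (1 - ↑(q ^ (-l))) * (y * ↑(q ^ l) - w * ↑(q ^ (-m))) =
      (↑(q ^ (-(m + 1))) - 1) * (y * ↑(q ^ l) - w * ↑(q ^ (1 - l))) := by
  have h₁ : q ^ (-(m + 1)) * q ^ (m + 1 - l) = q ^ (-l) := by rw [← zpow_add]; ring_nf
  have h₂ : q ^ (-m) = q * q ^ (-(m + 1)) := by rw [← zpow_one_add]; ring_nf
  have h₃ : q ^ (1 - l) = q * q ^ (-l) := by rw [← zpow_one_add, sub_eq_add_neg]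
  replace h₁ := congrArg Units.val h₁
  simp only [h₂, h₃, Units.val_mul] at h₁ ⊢
  linear_combination (-(y * ↑(q ^ l)) + w * q) * h₁

theorem prod_qQuadraticLattice_sub_sub (l : ℤ) (m : ℕ) :
    ∏ r ∈ range (m + 1), (qQuadraticLattice q y w (l - 1) - qQuadraticLattice q y w r) -
        ∏ r ∈ range (m + 1), (qQuadraticLattice q y w l - qQuadraticLattice q y w r) =
      (↑(q ^ (-(m + 1) : ℤ)) - 1) * (y * ↑(q ^ l) - w * ↑(q ^ (1 - l))) *
        ∏ r ∈ range m,
          (qQuadraticLattice q y (w * q) l - qQuadraticLattice q y (w * q) (r + 1 : ℕ)) := by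
  let A (r : ℤ) : R := 1 - ↑(q ^ (r - l))
  let B (r : ℤ) : R := y * ↑(q ^ l) - w * ↑(q ^ (-r))
  have at_self (r : ℤ) : qQuadraticLattice q y w l - qQuadraticLattice q y w r = A r * B r := by
    rw [← neg_sub, qQuadraticLattice_sub]
    ring
  have at_pred (r : ℤ) : qQuadraticLattice q y w (l - 1) - qQuadraticLattice q y w r =
      ↑q⁻¹ * (A (r + 1) * B (r - 1)) := by
    have h₁ : q ^ (l - 1) = q⁻¹ * q ^ l := by rw [zpow_sub_one, mul_comm]
    have h₂ : q ^ (-r) = q⁻¹ * q ^ (-(r - 1)) := by rw [← zpow_neg_one, ← zpow_add]; ring_nf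
    have h₃ : r - (l - 1) = r + 1 - l := by ring
    rw [← neg_sub, qQuadraticLattice_sub, h₁, h₂, h₃]
    push_cast
    ring
  have shifted (r : ℤ) : qQuadraticLattice q y (w * q) l - qQuadraticLattice q y (w * q) (r + 1) =
      A (r + 1) * B r := by
    have h : q ^ (-r) = q * q ^ (-(r + 1)) := by rw [← zpow_one_add]; ring_nf
    rw [← neg_sub, qQuadraticLattice_sub]
    simp only [A, B, h]
    push_cast
    ring
  have q_inv_pow : (↑q⁻¹ : R) ^ (m + 1) = ↑(q ^ (-(m + 1) : ℤ)) := by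
    rw [← Units.val_pow_eq_pow_val, inv_pow, ← zpow_natCast, zpow_neg]; rfl
  -- The factors `A (r + 1)` and `B r` with `r < m` occur in both products; what remains at the ends
  -- is `newton_end_factors_sub`.
  rw [← newton_end_factors_sub]
  push_cast
  simp only [at_self, at_pred, shifted]
  rw [prod_mul_distrib, prod_const, card_range, q_inv_pow, prod_mul_distrib, prod_mul_distrib,
    prod_mul_distrib, prod_range_succ (fun r : ℕ => A (r + 1)), prod_range_succ' (fun r : ℕ => A r),
    prod_range_succ (fun r : ℕ => B r), prod_range_succ' (fun r : ℕ => B (r - 1))]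
  simp only [A, B, Nat.cast_add, Nat.cast_one, Nat.cast_zero, add_sub_cancel_right, zero_sub,
    neg_neg, zpow_one]
  ring

variable {n c : ℕ}

theorem prod_qQuadraticLattice_sub_sub_eq_sum_Icc {k l : Fin (c + 1)} (hkl : k ≤ l) (i : ℤ)
    (m : ℕ) :
    ∏ r ∈ range (m + 1), (qQuadraticLattice q y w (k - (i + 1)) - qQuadraticLattice q y w r) -
        ∏ r ∈ range (m + 1), (qQuadraticLattice q y w (l - i) - qQuadraticLattice q y w r) =
      (↑(q ^ (-(m + 1) : ℤ)) - 1) * ∑ p ∈ Icc k l, cellWeight q y w i (i + 1) p *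
        ∏ r ∈ range m,
          (qQuadraticLattice q y (w * q) (p - i) - qQuadraticLattice q y (w * q) (r + 1 : ℕ)) := by
  let N (p : ℕ) : R :=
    ∏ r ∈ range (m + 1), (qQuadraticLattice q y w (p - (i + 1)) - qQuadraticLattice q y w r)
  have N_succ (p : ℕ) : N (p + 1) =
      ∏ r ∈ range (m + 1), (qQuadraticLattice q y w (p - i) - qQuadraticLattice q y w r) := by
    simp only [N, Nat.cast_add, Nat.cast_one, add_sub_add_right_eq_sub]
  have sub_succ (p : ℕ) : N p - N (p + 1) = (↑(q ^ (-(m + 1) : ℤ)) - 1) *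
      (cellWeight q y w i (i + 1) p * ∏ r ∈ range m,
        (qQuadraticLattice q y (w * q) (p - i) - qQuadraticLattice q y (w * q) (r + 1 : ℕ))) := by
    have h := prod_qQuadraticLattice_sub_sub q y w (p - i) m
    rw [sub_sub, show 1 - (p - i) = i + 1 - (p : ℤ) by ring] at h
    rw [N_succ, ← mul_assoc, cellWeight, ← h]
  have telescope : ∑ p ∈ Icc k l, (N p - N (p + 1)) = N k - N (l + 1) := by
    rw [← neg_inj, neg_sub, ← sum_Icc_sub hkl N, ← Fin.map_valEmbedding_Icc, sum_map,
      ← sum_neg_distrib]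
    simp
  rw [mul_sum, ← N_succ, ← telescope]
  exact sum_congr rfl fun p _ => sub_succ p

theorem det_vandermonde_qQuadraticLattice_succ {lam : Fin (n + 1) → Fin (c + 1)}
    (hlam : Antitone lam) :
    (Matrix.vandermonde fun i => qQuadraticLattice q y w (lam i - i)).det =
      (∏ j : Fin n, (↑(q ^ (-(j + 1) : ℤ)) - 1 : R)) * ∑ mu ∈ interlacing lam,
        (∏ i : Fin n, cellWeight q y w i (i + 1) (mu i)) *
          (Matrix.vandermonde fun i => qQuadraticLattice q y (w * q) (mu i - i)).det := by
  rw [det_vandermonde_eq_det_newton _ fun r => qQuadraticLattice q y w r,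
    det_eq_det_sub_pred_of_column_zero_eq_one (by simp)]
  simp only [Matrix.of_apply, Fin.val_succ, Fin.val_castSucc, Nat.cast_add, Nat.cast_one,
    prod_qQuadraticLattice_sub_sub_eq_sum_Icc q y w (hlam (Fin.castSucc_le_succ _))]
  refine (Matrix.det_mul_row _ (Matrix.of fun i j : Fin n =>
    ∑ p ∈ Icc (lam i.succ) (lam i.castSucc), _ * ∏ r ∈ range j, _)).trans ?_
  rw [det_sum_row_eq_sum_piFinset]
  refine congrArg _ (sum_congr rfl fun mu _ => ?_)
  rw [det_vandermonde_eq_det_newton _ fun r => qQuadraticLattice q y (w * q) (r + 1 : ℕ),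
    ← Matrix.det_mul_column]
  rfl

theorem prod_qQuadraticLattice_sub_eq_sum {lam : Fin n → Fin (c + 1)} (hlam : Antitone lam) :
    ∏ i : Fin n, ∏ j ∈ Ioi i,
        (qQuadraticLattice q y w (lam j - j) - qQuadraticLattice q y w (lam i - i)) =
      (∏ i : Fin n, ∏ j ∈ Ioi i, (↑(q ^ ((i : ℤ) - j)) - 1 : R)) *
        ∑ T ∈ symmetricPlanePartitions lam,
          ∏ i : Fin n, ∏ j ∈ Ioi i, cellWeight q y w i j (T i j) := by
  induction n generalizing w with
  | zero => simp [symmetricPlanePartitions, IsPlanePartition]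
  | succ n ih =>
    have zpow_prod : ∏ i : Fin (n + 1), ∏ j ∈ Ioi i, (↑(q ^ ((i : ℤ) - j)) - 1 : R) =
        (∏ j : Fin n, (↑(q ^ (-(j + 1) : ℤ)) - 1 : R)) *
          ∏ i : Fin n, ∏ j ∈ Ioi i, (↑(q ^ ((i : ℤ) - j)) - 1 : R) := by
      simp only [Fin.prod_univ_succ, Fin.prod_Ioi_zero, Fin.prod_Ioi_succ, Fin.val_zero,
        Fin.val_succ, Nat.cast_zero, Nat.cast_add, Nat.cast_one, zero_sub, add_sub_add_right_eq_sub]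
    rw [← Matrix.det_vandermonde fun i => qQuadraticLattice q y w (lam i - i),
      det_vandermonde_qQuadraticLattice_succ q y w hlam, zpow_prod, mul_assoc,
      sum_symmetricPlanePartitions_succ hlam fun i j m => cellWeight q y w i j m]
    congr 1
    rw [mul_sum]
    refine sum_congr rfl fun mu hmu => ?_
    rw [Matrix.det_vandermonde, ih (w * q) (antitone_of_mem_interlacing hlam hmu)]
    simp only [cellWeight_mul_self, Fin.val_castSucc, Fin.val_succ, Nat.cast_add, Nat.cast_one]
    ring

theorem qQuadraticLattice_sub_eq_mul_cellWeight (i j k l : ℤ) :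
    qQuadraticLattice q y w (l - j) - qQuadraticLattice q y w (k - i) =
      (↑(q ^ (i - j - k + l)) - 1) * cellWeight q y w i (j + (k - l)) k := by
  rw [qQuadraticLattice_sub, cellWeight]
  ring_nf

end QQuadraticLattice

section MacMahon

theorem prod_eq_sum_planePartition_of_isDomain (a b c : ℕ) {R : Type*} [CommRing R] [IsDomain R]
    {q : Rˣ} {y : R}
    (hq : ∀ m : ℤ, m ≠ 0 → (↑(q ^ m) : R) ≠ 1) (hy : ∀ m k : ℤ, y * ↑(q ^ m) ≠ ↑(q ^ k)) :
    ∏ i : Fin a, ∏ j : Fin b,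
        (↑(q ^ ((i : ℤ) - (a + j) - c)) - 1) * cellWeight q y 1 i (a + j + c) c =
      (∏ i : Fin a, ∏ j : Fin b, (↑(q ^ ((i : ℤ) - (a + j))) - 1 : R)) *
        ∑ P : {P : Fin a → Fin b → Fin (c + 1) // IsPlanePartition P},
          ∏ i : Fin a, ∏ j : Fin b, cellWeight q y 1 i (a + j) (P.1 i j) := by
  have pattern_sum :=
    prod_qQuadraticLattice_sub_eq_sum q y 1 (antitone_rectangle (a := a) (b := b) (c := c))
  rw [sum_symmetricPlanePartitions_rectangle fun i j m => cellWeight q y 1 i j m] at pattern_sum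
  simp only [prod_Ioi_fin_add, qQuadraticLattice_sub_eq_mul_cellWeight, rectangle, Fin.append_left,
    Fin.append_right, Fin.val_last, Fin.val_castAdd, Fin.val_natAdd, Fin.val_zero, Nat.cast_add,
    Nat.cast_zero, sub_add_cancel, sub_self, sub_zero, add_zero, add_sub_add_left_eq_sub]
    at pattern_sum
  simp only [prod_mul_distrib] at pattern_sum ⊢
  have zpow_ne (n : ℕ) : ∏ i : Fin n, ∏ j ∈ Ioi i, (↑(q ^ ((i : ℤ) - j)) - 1 : R) ≠ 0 :=
    prod_ne_zero_iff.2 fun i _ => prod_ne_zero_iff.2 fun j hj =>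
      sub_ne_zero.2 <| hq _ <| sub_ne_zero.2 <| by
        exact_mod_cast Fin.val_ne_of_ne (mem_Ioi.1 hj).ne
  have cellWeight_ne {n : ℕ} (f g : Fin n → ℤ) (m : ℤ) :
      ∏ i : Fin n, ∏ j ∈ Ioi i, cellWeight q y 1 (f i) (g j) m ≠ 0 :=
    prod_ne_zero_iff.2 fun i _ => prod_ne_zero_iff.2 fun j _ => by
      rw [cellWeight, one_mul]
      exact sub_ne_zero.2 (hy _ _)
  -- The diagonal blocks contribute the same nonzero factor to both sides.
  have diagonal_ne := mul_ne_zero (mul_ne_zero (zpow_ne a) (zpow_ne b))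
    (mul_ne_zero (cellWeight_ne (n := a) (fun i => i) (fun j => j) c)
      (cellWeight_ne (n := b) (fun i => a + i) (fun j => a + j) 0))
  refine mul_left_cancel₀ diagonal_ne ?_
  linear_combination pattern_sum

variable {R S : Type*} [CommRing R] [CommRing S]

theorem map_cellWeight (φ : R →+* S) (q : Rˣ) (y w : R) (i j m : ℤ) :
    φ (cellWeight q y w i j m) = cellWeight (Units.map φ q) (φ y) (φ w) i j m := by
  simp only [cellWeight, map_sub, map_mul, ← map_zpow, Units.coe_map, MonoidHom.coe_coe]

/-- The ring `ℤ[T;T⁻¹][X]`, which is universal for a unit `q = T` and an element `y = X`. -/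
abbrev GenericRing : Type :=
  Polynomial (LaurentPolynomial ℤ)

/-- The universal value `T` of `q`. -/
noncomputable def genericUnit : GenericRingˣ where
  val := Polynomial.C (LaurentPolynomial.T 1)
  inv := Polynomial.C (LaurentPolynomial.T (-1))
  val_inv := by rw [← map_mul, ← LaurentPolynomial.T_add]; simp
  inv_val := by rw [← map_mul, ← LaurentPolynomial.T_add]; simp

/-- The specialization `T ↦ q`, `X ↦ y`. -/
noncomputable def specialization (q : Rˣ) (y : R) : GenericRing →+* R :=
  Polynomial.eval₂RingHom (LaurentPolynomial.eval₂ (Int.castRingHom R) q) y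

theorem map_specialization_genericUnit (q : Rˣ) (y : R) :
    Units.map (specialization q y) genericUnit = q := by
  ext
  simp [specialization, genericUnit]

theorem specialization_X (q : Rˣ) (y : R) : specialization q y Polynomial.X = y :=
  Polynomial.eval₂_X _ _

theorem genericUnit_zpow (m : ℤ) :
    (↑(genericUnit ^ m) : GenericRing) = Polynomial.C (LaurentPolynomial.T m) := by
  induction m with
  | zero => simp
  | succ m ih =>
    rw [zpow_add_one, Units.val_mul, ih, LaurentPolynomial.T_add, map_mul]
    rfl
  | pred m ih =>
    rw [zpow_sub_one, Units.val_mul, ih, LaurentPolynomial.T_sub, map_mul]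
    rfl

theorem genericUnit_zpow_ne_one {m : ℤ} (hm : m ≠ 0) : (↑(genericUnit ^ m) : GenericRing) ≠ 1 := by
  rw [genericUnit_zpow, ← Polynomial.C_1, Polynomial.C_injective.ne_iff, ← LaurentPolynomial.T_zero]
  intro h
  have degree_eq := congrArg LaurentPolynomial.degree h
  rw [LaurentPolynomial.degree_T, LaurentPolynomial.degree_T] at degree_eq
  exact hm (WithBot.coe_injective degree_eq)

theorem X_mul_genericUnit_zpow_ne (m k : ℤ) :
    (Polynomial.X : GenericRing) * ↑(genericUnit ^ m) ≠ ↑(genericUnit ^ k) := by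
  rw [genericUnit_zpow, genericUnit_zpow]
  intro h
  have coeff_eq := congrArg (Polynomial.coeff · 1) h
  simp [Polynomial.coeff_C, (LaurentPolynomial.isUnit_T (R := ℤ) m).ne_zero] at coeff_eq

theorem prod_eq_sum_planePartition (a b c : ℕ) (q : Rˣ) (y : R) :
    ∏ i : Fin a, ∏ j : Fin b,
        (↑(q ^ ((i : ℤ) - (a + j) - c)) - 1) * cellWeight q y 1 i (a + j + c) c =
      (∏ i : Fin a, ∏ j : Fin b, (↑(q ^ ((i : ℤ) - (a + j))) - 1 : R)) *
        ∑ P : {P : Fin a → Fin b → Fin (c + 1) // IsPlanePartition P},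
          ∏ i : Fin a, ∏ j : Fin b, cellWeight q y 1 i (a + j) (P.1 i j) := by
  have generic := congrArg (specialization q y) <| prod_eq_sum_planePartition_of_isDomain a b c
    (fun _ => genericUnit_zpow_ne_one) X_mul_genericUnit_zpow_ne
  have map_zpow (m : ℤ) : specialization q y ↑(genericUnit ^ m) = ↑(q ^ m) := by
    rw [← map_specialization_genericUnit q y, ← map_zpow, map_specialization_genericUnit]
    rfl
  simpa only [map_mul, map_prod, map_sum, map_sub, map_one, map_cellWeight, map_zpow,
    map_specialization_genericUnit, specialization_X] using generic

theorem zpow_sub_one_mul_cellWeight (q : Rˣ) (z : R) (a i j m d : ℤ) :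
    (↑(q ^ (i - (a + j) - d)) - 1) * cellWeight q (z * ↑(q ^ a)) 1 i (a + j + d) m =
      ↑(q ^ (m - j - d)) * ((1 - ↑(q ^ (a + j + d - i))) * (z - ↑(q ^ (i + j + d - 2 * m)))) := by
  have h₁ : q ^ (m - j - d) = q ^ (i - (a + j) - d) * (q ^ a * q ^ (m - i)) := by
    rw [← zpow_add, ← zpow_add]; ring_nf
  have h₂ : q ^ (i - (a + j) - d) * q ^ (a + j + d - i) = 1 := by
    rw [← zpow_add, ← zpow_zero q]; ring_nf
  have h₃ : q ^ (a + j + d - m) = q ^ a * q ^ (m - i) * q ^ (i + j + d - 2 * m) := by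
    rw [← zpow_add, ← zpow_add]; ring_nf
  replace h₂ := congrArg Units.val h₂
  simp only [cellWeight, h₁, h₃, Units.val_mul, Units.val_one] at h₂ ⊢
  linear_combination (↑(q ^ a) * ↑(q ^ (m - i)) * (z - ↑(q ^ (i + j + d - 2 * m)))) * h₂

theorem prod_one_sub_pow_eq_prod_zpow (a b d : ℕ) (q : Rˣ) :
    ∏ i : Fin a, ∏ j : Fin b, (1 - (q : R) ^ ((i : ℕ) + j + 1 + d)) =
      ∏ i : Fin a, ∏ j : Fin b, (1 - ↑(q ^ ((a : ℤ) + j + d - i)) : R) := by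
  rw [← Equiv.prod_comp Fin.revPerm]
  refine prod_congr rfl fun i _ => prod_congr rfl fun j _ => ?_
  rw [← Units.val_pow_eq_pow_val, ← zpow_natCast, Fin.revPerm_apply, Fin.val_rev]
  congr 3
  omega

theorem prod_mul_sum_planePartition (a b c : ℕ) (q : Rˣ) (z : R) :
    (∏ i : Fin a, ∏ j : Fin b, (1 - (q : R) ^ ((i : ℕ) + j + 1))) *
        ∑ P : {P : Fin a → Fin b → Fin (c + 1) // IsPlanePartition P},
          (q : R) ^ ppVolume P.1 *
            ∏ i : Fin a, ∏ j : Fin b, (z - ↑(q ^ ((i : ℤ) + j - 2 * (P.1 i j : ℤ)))) =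
      (∏ i : Fin a, ∏ j : Fin b, (1 - (q : R) ^ ((i : ℕ) + j + 1 + c))) *
        ∏ i : Fin a, ∏ j : Fin b, (z - ↑(q ^ ((i : ℤ) + j - c))) := by
  let u : Rˣ := ∏ _i : Fin a, ∏ j : Fin b, q ^ (-j : ℤ)
  have u_val : (u : R) = ∏ _i : Fin a, ∏ j : Fin b, ↑(q ^ (-j : ℤ)) := by
    simp only [u, Units.coe_prod]
  have product_side : ∏ i : Fin a, ∏ j : Fin b, (↑(q ^ ((i : ℤ) - (a + j) - c)) - 1) *
        cellWeight q (z * ↑(q ^ (a : ℤ))) 1 i (a + j + c) c =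
      u * ((∏ i : Fin a, ∏ j : Fin b, (1 - (q : R) ^ ((i : ℕ) + j + 1 + c))) *
        ∏ i : Fin a, ∏ j : Fin b, (z - ↑(q ^ ((i : ℤ) + j - c)))) := by
    rw [prod_one_sub_pow_eq_prod_zpow, u_val]
    simp only [← prod_mul_distrib, zpow_sub_one_mul_cellWeight]
    refine prod_congr rfl fun i _ => prod_congr rfl fun j _ => ?_
    rw [show (c : ℤ) - j - c = -j by ring, show (i : ℤ) + j + c - 2 * c = i + j - c by ring]
  have sum_side (P : Fin a → Fin b → Fin (c + 1)) :
      (∏ i : Fin a, ∏ j : Fin b, (↑(q ^ ((i : ℤ) - (a + j))) - 1 : R)) *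
          ∏ i : Fin a, ∏ j : Fin b, cellWeight q (z * ↑(q ^ (a : ℤ))) 1 i (a + j) (P i j) =
        u * ((∏ i : Fin a, ∏ j : Fin b, (1 - (q : R) ^ ((i : ℕ) + j + 1))) *
          ((q : R) ^ ppVolume P *
            ∏ i : Fin a, ∏ j : Fin b, (z - ↑(q ^ ((i : ℤ) + j - 2 * (P i j : ℤ)))))) := by
    have one_sub_eq := prod_one_sub_pow_eq_prod_zpow a b 0 q
    have factor (i j m : ℤ) := zpow_sub_one_mul_cellWeight q z a i j m 0
    simp only [Nat.cast_zero, add_zero, sub_zero] at one_sub_eq factor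
    rw [one_sub_eq, u_val]
    simp only [ppVolume, ← prod_pow_eq_pow_sum, ← prod_mul_distrib, factor]
    refine prod_congr rfl fun i _ => prod_congr rfl fun j _ => ?_
    rw [sub_eq_add_neg (P i j : ℤ), zpow_add, Units.val_mul, zpow_natCast, Units.val_pow_eq_pow_val]
    ring
  have identity := prod_eq_sum_planePartition a b c q (z * ↑(q ^ (a : ℤ)))
  rw [product_side, mul_sum] at identity
  simp only [sum_side, ← mul_sum] at identity
  exact (u.mul_right_inj.1 identity).symm

end MacMahon

theorem q_macmahon_identity_general {F : Type*} [Field F] (a b c : ℕ) (q z : F) (hq : q ≠ 0)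
    (hden1 : ∀ i j : ℕ, 1 ≤ i → i ≤ a → 1 ≤ j → j ≤ b →
      z - q ^ ((i : ℤ) + j - (c : ℤ) - 2) ≠ 0)
    (hden2 : ∀ i j : ℕ, 1 ≤ i → i ≤ a → 1 ≤ j → j ≤ b → 1 - q ^ (i + j - 1) ≠ 0) :
    ∑ P : {P : Fin a → Fin b → Fin (c + 1) // IsPlanePartition P},
      q ^ ppVolume P.1 *
        ∏ i : Fin a, ∏ j : Fin b,
          ((z - q ^ (((i : ℤ) + 1) + ((j : ℤ) + 1) - 2 * (P.1 i j : ℤ) - 2)) /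
            (z - q ^ (((i : ℤ) + 1) + ((j : ℤ) + 1) - (c : ℤ) - 2))) =
    ∏ i : Fin a, ∏ j : Fin b,
      ((1 - q ^ (((i : ℕ) + 1) + ((j : ℕ) + 1) + c - 1)) /
        (1 - q ^ (((i : ℕ) + 1) + ((j : ℕ) + 1) - 1))) := by
  have shift (i j d : ℤ) : i + 1 + (j + 1) - d - 2 = i + j - d := by ring
  have shift_nat (i j : ℕ) : i + 1 + (j + 1) - 1 = i + j + 1 := by omega
  have shift_nat_add (i j : ℕ) : i + 1 + (j + 1) + c - 1 = i + j + 1 + c := by omega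
  have lattice_ne : ∏ i : Fin a, ∏ j : Fin b, (z - q ^ ((i : ℤ) + j - c)) ≠ 0 :=
    prod_ne_zero_iff.2 fun i _ => prod_ne_zero_iff.2 fun j _ => by
      simpa [shift] using hden1 (i + 1) (j + 1) (by omega) i.isLt (by omega) j.isLt
  have volume_ne : ∏ i : Fin a, ∏ j : Fin b, (1 - q ^ ((i : ℕ) + j + 1)) ≠ 0 :=
    prod_ne_zero_iff.2 fun i _ => prod_ne_zero_iff.2 fun j _ => by
      simpa only [shift_nat] using hden2 (i + 1) (j + 1) (by omega) i.isLt (by omega) j.isLt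
  have identity := prod_mul_sum_planePartition a b c (Units.mk0 q hq) z
  simp only [Units.val_zpow_eq_zpow_val, Units.val_mk0] at identity
  simp only [shift, shift_nat, shift_nat_add, prod_div_distrib, mul_div_assoc', ← sum_div]
  rw [div_eq_div_iff lattice_ne volume_ne, mul_comm, identity]

/-- q-deformed MacMahon identity:
`Σ_Π q^{|Π|} ∏_{i,j} (ζ² − q^{i+j−2Π_{ij}−2})/(ζ² − q^{i+j−c−2})
  = ∏_{i,j} (1 − q^{i+j+c−1})/(1 − q^{i+j−1})`
(with `1 ≤ i ≤ a`, `1 ≤ j ≤ b`). -/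
theorem q_macmahon_identity (a b c : ℕ) (ha : 0 < a) (hb : 0 < b) (hc : 0 < c)
    (q ζ : ℂ) (hq : q ≠ 0)
    (hden1 : ∀ i j : ℕ, 1 ≤ i → i ≤ a → 1 ≤ j → j ≤ b →
      ζ ^ 2 - q ^ ((i : ℤ) + j - (c : ℤ) - 2) ≠ 0)
    (hden2 : ∀ i j : ℕ, 1 ≤ i → i ≤ a → 1 ≤ j → j ≤ b → 1 - q ^ (i + j - 1) ≠ 0) :
    ∑ P : {P : Fin a → Fin b → Fin (c + 1) // IsPlanePartition P},
      q ^ ppVolume P.1 *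
        ∏ i : Fin a, ∏ j : Fin b,
          ((ζ ^ 2 - q ^ (((i : ℤ) + 1) + ((j : ℤ) + 1) - 2 * (P.1 i j : ℤ) - 2)) /
            (ζ ^ 2 - q ^ (((i : ℤ) + 1) + ((j : ℤ) + 1) - (c : ℤ) - 2))) =
    ∏ i : Fin a, ∏ j : Fin b,
      ((1 - q ^ (((i : ℕ) + 1) + ((j : ℕ) + 1) + c - 1)) /
        (1 - q ^ (((i : ℕ) + 1) + ((j : ℕ) + 1) - 1))) :=
  q_macmahon_identity_general a b c q (ζ ^ 2) hq hden1 hden2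
end

section
/- (Commutation of two-diagonal transfer matrices) Let U_{t+}^{S,t}, U_{S−}^{S,t} be the two-diagonal matrices with entries: U_{t+}^{S,t}(x,x+1) = −q^{T+N−1−t}(1−q^{x−S−N+1})(1−κ²q^{x−T+1})/(1−κ²q^{2x−t−S+1}), U_{t+}^{S,t}(x,x) = (1−q^{x+T−t−S})(1−κ²q^{x+N−t})/(1−κ²q^{2x−t−S+1}); U_{S−}^{S,t}(x,x−1) = q^{−(S+N−1)}(1−q^x)(1−κ²q^{x+N−t})/(1−κ²q^{2x−t−S+1}), U_{S−}^{S,t}(x,x) = −(1−q^{x−S−N+1})(1−κ²q^{x−S−t+1})/(1−κ²q^{2x−t−S+1}), and both matrices vanish at all other entries. Then the matrix identity U_{t+}^{S,t} · U_{S−}^{S,t+1} = U_{S−}^{S,t} · U_{t+}^{S−1,t} holds entrywise (for all x, y with |x−y| ≤ 1), for parameters q, κ, N, T such that no denominator vanishes. -/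
open Finset

/-- The two-diagonal matrix `U_{t+}^{S,t}` (entries indexed by `x, y ∈ ℤ`). -/
noncomputable def Utp (q κ : ℂ) (N T S t : ℤ) (x y : ℤ) : ℂ :=
  if y = x + 1 then
    -q ^ (T + N - 1 - t) * (1 - q ^ (x - S - N + 1)) * (1 - κ ^ 2 * q ^ (x - T + 1)) /
      (1 - κ ^ 2 * q ^ (2 * x - t - S + 1))
  else if y = x then
    (1 - q ^ (x + T - t - S)) * (1 - κ ^ 2 * q ^ (x + N - t)) /
      (1 - κ ^ 2 * q ^ (2 * x - t - S + 1))
  else 0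

/-- The two-diagonal matrix `U_{S−}^{S,t}` (entries indexed by `x, y ∈ ℤ`). -/
noncomputable def USm (q κ : ℂ) (N T S t : ℤ) (x y : ℤ) : ℂ :=
  if y = x - 1 then
    q ^ (-(S + N - 1)) * (1 - q ^ x) * (1 - κ ^ 2 * q ^ (x + N - t)) /
      (1 - κ ^ 2 * q ^ (2 * x - t - S + 1))
  else if y = x then
    -(1 - q ^ (x - S - N + 1)) * (1 - κ ^ 2 * q ^ (x - S - t + 1)) /
      (1 - κ ^ 2 * q ^ (2 * x - t - S + 1))
  else 0

/-! Outside the diagonal the two products agree factor by factor. On the diagonal, all four terms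
share the factor `(1 - q^(x-S-N+1)) (1 - κ² q^(x+N-t)) / (1 - κ² q^(2x-t-S+1))`. Up to that factor
and a sign, moving one term of each product to the other side leaves a single quotient, evaluated
at `z = x` on the left and at `z = x + 1` on the right. Its numerator is
`(1 - q^(z+T-t-S)) (1 - κ² q^(z-t-S)) - q^(T-t-S) (1 - q^z) (1 - κ² q^(z-T))`
and its denominator `1 - κ² q^(2z-t-S)`. The denominator divides the numerator, and the result
`1 - q^(T-t-S)` does not depend on `z`. -/

section Bidiagonal

variable {R : Type*}

/-- The upper bidiagonal matrix over `ℤ` with diagonal `d` and superdiagonal `u`. Both are indexed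
by the row, so that `u x` is the entry `(x, x + 1)`. -/
def upperBidiagonal [Zero R] (d u : ℤ → R) : Matrix ℤ ℤ R :=
  .of fun x y => if y = x + 1 then u x else if y = x then d x else 0

/-- The lower bidiagonal matrix over `ℤ` with subdiagonal `l` and diagonal `d`. Both are indexed
by the row, so that `l x` is the entry `(x, x - 1)`. -/
def lowerBidiagonal [Zero R] (l d : ℤ → R) : Matrix ℤ ℤ R :=
  .of fun x y => if y = x - 1 then l x else if y = x then d x else 0

theorem upperBidiagonal_lowerBidiagonal_exchange [NonUnitalNonAssocSemiring R]
    {d₁ u₁ l₁ e₁ l₂ e₂ d₂ u₂ : ℤ → R} {x : ℤ}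
    (hsub : d₁ x * l₁ x = l₂ x * d₂ (x - 1))
    (hdiag : d₁ x * e₁ x + u₁ x * l₁ (x + 1) = l₂ x * u₂ (x - 1) + e₂ x * d₂ x)
    (hsuper : u₁ x * e₁ (x + 1) = e₂ x * u₂ x) (y : ℤ) :
    upperBidiagonal d₁ u₁ x x * lowerBidiagonal l₁ e₁ x y +
        upperBidiagonal d₁ u₁ x (x + 1) * lowerBidiagonal l₁ e₁ (x + 1) y =
      lowerBidiagonal l₂ e₂ x (x - 1) * upperBidiagonal d₂ u₂ (x - 1) y +
        lowerBidiagonal l₂ e₂ x x * upperBidiagonal d₂ u₂ x y := by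
  obtain rfl | hy_sub := eq_or_ne y (x - 1)
  · simpa [upperBidiagonal, lowerBidiagonal, sub_eq_add_neg, add_assoc] using hsub
  obtain rfl | hy_diag := eq_or_ne y x
  · simpa [upperBidiagonal, lowerBidiagonal, (sub_one_lt y).ne'] using hdiag
  obtain rfl | hy_super := eq_or_ne y (x + 1)
  · simpa [upperBidiagonal, lowerBidiagonal, hy_sub, (sub_one_lt x).ne'] using hsuper
  · simp [upperBidiagonal, lowerBidiagonal, hy_sub, hy_diag, hy_super]

end Bidiagonal

section TransferMatrix

variable {K : Type*} [Field K]

/-- The diagonal entry `U_{t+}^{S,t}(x,x)`, over an arbitrary field. -/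
def tPlusDiag (q κ : K) (N T S t x : ℤ) : K :=
  (1 - q ^ (x + T - t - S)) * (1 - κ ^ 2 * q ^ (x + N - t)) /
    (1 - κ ^ 2 * q ^ (2 * x - t - S + 1))

/-- The superdiagonal entry `U_{t+}^{S,t}(x,x+1)`, over an arbitrary field. -/
def tPlusSuper (q κ : K) (N T S t x : ℤ) : K :=
  -q ^ (T + N - 1 - t) * (1 - q ^ (x - S - N + 1)) * (1 - κ ^ 2 * q ^ (x - T + 1)) /
    (1 - κ ^ 2 * q ^ (2 * x - t - S + 1))

/-- The subdiagonal entry `U_{S−}^{S,t}(x,x−1)`, over an arbitrary field. -/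
def sMinusSub (q κ : K) (N S t x : ℤ) : K :=
  q ^ (-(S + N - 1)) * (1 - q ^ x) * (1 - κ ^ 2 * q ^ (x + N - t)) /
    (1 - κ ^ 2 * q ^ (2 * x - t - S + 1))

/-- The diagonal entry `U_{S−}^{S,t}(x,x)`, over an arbitrary field. -/
def sMinusDiag (q κ : K) (N S t x : ℤ) : K :=
  -(1 - q ^ (x - S - N + 1)) * (1 - κ ^ 2 * q ^ (x - S - t + 1)) /
    (1 - κ ^ 2 * q ^ (2 * x - t - S + 1))

/-- The matrix `U_{t+}^{S,t}` over an arbitrary field. -/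
def tPlusMatrix (q κ : K) (N T S t : ℤ) : Matrix ℤ ℤ K :=
  upperBidiagonal (tPlusDiag q κ N T S t) (tPlusSuper q κ N T S t)

/-- The matrix `U_{S−}^{S,t}` over an arbitrary field; its entries do not involve `T`. -/
def sMinusMatrix (q κ : K) (N S t : ℤ) : Matrix ℤ ℤ K :=
  lowerBidiagonal (sMinusSub q κ N S t) (sMinusDiag q κ N S t)

theorem tPlusDiag_mul_sMinusSub (q κ : K) (N T S t x : ℤ) :
    tPlusDiag q κ N T S t x * sMinusSub q κ N S (t + 1) x =
      sMinusSub q κ N S t x * tPlusDiag q κ N T (S - 1) t (x - 1) := by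
  have hT : x - 1 + T - t - (S - 1) = x + T - t - S := by ring
  have hN : x - 1 + N - t = x + N - (t + 1) := by ring
  have hden : 2 * (x - 1) - t - (S - 1) + 1 = 2 * x - (t + 1) - S + 1 := by ring
  rw [tPlusDiag, sMinusSub, sMinusSub, tPlusDiag, hT, hN, hden]
  ring

theorem tPlusSuper_mul_sMinusDiag (q κ : K) (N T S t x : ℤ) :
    tPlusSuper q κ N T S t x * sMinusDiag q κ N S (t + 1) (x + 1) =
      sMinusDiag q κ N S t x * tPlusSuper q κ N T (S - 1) t x := by
  have hS : x - (S - 1) - N + 1 = x + 1 - S - N + 1 := by ring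
  have ht : x + 1 - S - (t + 1) + 1 = x - S - t + 1 := by ring
  have hden : 2 * (x + 1) - (t + 1) - S + 1 = 2 * x - t - (S - 1) + 1 := by ring
  rw [tPlusSuper, sMinusDiag, sMinusDiag, tPlusSuper, hS, ht, hden]
  ring

theorem one_sub_zpow_mul_sub_zpow_mul {q : K} (hq : q ≠ 0) (k : K) (m n z : ℤ) :
    (1 - q ^ (z + m)) * (1 - k * q ^ (z + m + n)) -
        q ^ m * ((1 - q ^ z) * (1 - k * q ^ (z + n))) =
      (1 - q ^ m) * (1 - k * q ^ (2 * z + m + n)) := by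
  simp only [two_mul, zpow_add₀ hq]
  ring

theorem one_sub_zpow_mul_sub_zpow_mul_div {q k : K} (hq : q ≠ 0) {m n z : ℤ}
    (hden : 1 - k * q ^ (2 * z + m + n) ≠ 0) :
    ((1 - q ^ (z + m)) * (1 - k * q ^ (z + m + n)) -
        q ^ m * ((1 - q ^ z) * (1 - k * q ^ (z + n)))) / (1 - k * q ^ (2 * z + m + n)) =
      1 - q ^ m := by
  rw [one_sub_zpow_mul_sub_zpow_mul hq, mul_div_cancel_right₀ _ hden]

theorem zpow_tPlusSuper_mul_zpow_sMinusSub {q : K} (hq : q ≠ 0) (N T S t : ℤ) :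
    q ^ (T + N - 1 - t) * q ^ (-(S + N - 1)) = q ^ (T - t - S) := by
  rw [← zpow_add₀ hq]
  ring_nf

theorem tPlusDiag_mul_sMinusDiag_sub {q κ : K} (hq : q ≠ 0) (N T : ℤ) {S t x : ℤ}
    (hden : 1 - κ ^ 2 * q ^ (2 * x - t - S) ≠ 0) :
    tPlusDiag q κ N T S t x * sMinusDiag q κ N S (t + 1) x -
        sMinusSub q κ N S t x * tPlusSuper q κ N T (S - 1) t (x - 1) =
      -(1 - q ^ (x - S - N + 1)) * (1 - κ ^ 2 * q ^ (x + N - t)) /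
        (1 - κ ^ 2 * q ^ (2 * x - t - S + 1)) * (1 - q ^ (T - t - S)) := by
  have hz : 2 * x + (T - t - S) + -T = 2 * x - t - S := by ring
  have hquot := one_sub_zpow_mul_sub_zpow_mul_div (m := T - t - S) (n := -T) hq (hz ▸ hden)
  rw [← hquot, ← zpow_tPlusSuper_mul_zpow_sMinusSub hq N]
  simp only [tPlusDiag, sMinusDiag, sMinusSub, tPlusSuper]
  ring_nf

theorem sMinusDiag_mul_tPlusDiag_sub {q κ : K} (hq : q ≠ 0) (N T : ℤ) {S t x : ℤ}
    (hden : 1 - κ ^ 2 * q ^ (2 * (x + 1) - t - S) ≠ 0) :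
    sMinusDiag q κ N S t x * tPlusDiag q κ N T (S - 1) t x -
        tPlusSuper q κ N T S t x * sMinusSub q κ N S (t + 1) (x + 1) =
      -(1 - q ^ (x - S - N + 1)) * (1 - κ ^ 2 * q ^ (x + N - t)) /
        (1 - κ ^ 2 * q ^ (2 * x - t - S + 1)) * (1 - q ^ (T - t - S)) := by
  have hz : 2 * (x + 1) + (T - t - S) + -T = 2 * (x + 1) - t - S := by ring
  have hquot := one_sub_zpow_mul_sub_zpow_mul_div (m := T - t - S) (n := -T) hq (hz ▸ hden)
  rw [← hquot, ← zpow_tPlusSuper_mul_zpow_sMinusSub hq N]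
  simp only [tPlusDiag, sMinusDiag, sMinusSub, tPlusSuper]
  ring_nf

theorem tPlus_mul_sMinus_diag {q κ : K} (hq : q ≠ 0) (hgen : ∀ m : ℤ, 1 - κ ^ 2 * q ^ m ≠ 0)
    (N T S t x : ℤ) :
    tPlusDiag q κ N T S t x * sMinusDiag q κ N S (t + 1) x +
        tPlusSuper q κ N T S t x * sMinusSub q κ N S (t + 1) (x + 1) =
      sMinusSub q κ N S t x * tPlusSuper q κ N T (S - 1) t (x - 1) +
        sMinusDiag q κ N S t x * tPlusDiag q κ N T (S - 1) t x := by
  linear_combination tPlusDiag_mul_sMinusDiag_sub hq N T (hgen (2 * x - t - S)) -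
    sMinusDiag_mul_tPlusDiag_sub hq N T (hgen (2 * (x + 1) - t - S))

theorem transfer_matrix_commutation_general {q κ : K} (hq : q ≠ 0)
    (hgen : ∀ m : ℤ, 1 - κ ^ 2 * q ^ m ≠ 0) (N T S t x y : ℤ) :
    tPlusMatrix q κ N T S t x x * sMinusMatrix q κ N S (t + 1) x y +
        tPlusMatrix q κ N T S t x (x + 1) * sMinusMatrix q κ N S (t + 1) (x + 1) y =
      sMinusMatrix q κ N S t x (x - 1) * tPlusMatrix q κ N T (S - 1) t (x - 1) y +
        sMinusMatrix q κ N S t x x * tPlusMatrix q κ N T (S - 1) t x y :=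
  upperBidiagonal_lowerBidiagonal_exchange (tPlusDiag_mul_sMinusSub q κ N T S t x)
    (tPlus_mul_sMinus_diag hq hgen N T S t x) (tPlusSuper_mul_sMinusDiag q κ N T S t x) y

end TransferMatrix

/-- the commutation relation `U_{t+}^{S,t} · U_{S−}^{S,t+1} =
U_{S−}^{S,t} · U_{t+}^{S−1,t}`, written entrywise (each matrix product has at most
two nonzero terms, over the two-diagonal supports). -/
theorem transfer_matrix_commutation (q κ : ℂ) (hq : q ≠ 0) (N T : ℤ)
    (hgen : ∀ m : ℤ, 1 - κ ^ 2 * q ^ m ≠ 0) (S t : ℤ) (x y : ℤ) :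
    Utp q κ N T S t x x * USm q κ N T S (t + 1) x y +
      Utp q κ N T S t x (x + 1) * USm q κ N T S (t + 1) (x + 1) y =
    USm q κ N T S t x (x - 1) * Utp q κ N T (S - 1) t (x - 1) y +
      USm q κ N T S t x x * Utp q κ N T (S - 1) t x y :=
  transfer_matrix_commutation_general hq hgen N T S t x y
end
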